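/- arXiv:2104.12251 — 2 statements merged into one kernel-verified Lean document; each statement's English description precedes it below -/
import Mathlib

section
/- Let n ∈ {2,3}, μ > 0 and λ ∈ ℝ with ν := λ + 2μ > 0. Then there exists a constant C = C(n,μ,λ) such that every smooth compactly supported vector field u : ℝⁿ → ℝⁿ satisfies ‖u‖_{L^∞} ≤ C ‖u‖_{L²}^{1−n/4} ‖𝓛u‖_{L²}^{n/4}. -/
open MeasureTheory
open scoped ENNReal NNReal

noncomputable section

/-- Euclidean space `ℝⁿ`. -/
abbrev En (n : ℕ) := EuclideanSpace ℝ (Fin n)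

/-- Partial derivative `∂ᵢ f` of a scalar function on `ℝⁿ`. -/
def pdv {n : ℕ} (i : Fin n) (f : En n → ℝ) (x : En n) : ℝ :=
  fderiv ℝ f x (EuclideanSpace.single i 1)

/-- The Lamé operator `𝓛u = μΔu + (λ+μ)∇(div u)` acting on vector fields. -/
def lame {n : ℕ} (μ lam : ℝ) (u : En n → En n) (x : En n) : En n :=
  (EuclideanSpace.equiv (Fin n) ℝ).symm fun i =>
    μ * (∑ j, pdv j (fun y => pdv j (fun z => u z i) y) x)
      + (lam + μ) * pdv i (fun y => ∑ j, pdv j (fun z => u z j) y) x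

/-!
The supremum of `u` is at most the `L¹` norm of its Fourier transform `û`. Writing
`û = (1 + t|ξ|²)⁻¹ · (1 + t|ξ|²) û`, the Cauchy–Schwarz inequality and a dilation give
`‖û‖₁ ≤ K t^(-n/4) (‖û‖₂ + t ‖|ξ|² û‖₂)` with `K = ‖(1 + |ξ|²)⁻¹‖₂`, which is finite exactly because
`n < 4`; optimizing over `t > 0` yields Carlson's inequality
`‖û‖₁ ≤ C ‖û‖₂^(1 - n/4) ‖|ξ|² û‖₂^(n/4)`.

By Plancherel's theorem it remains to bound `|ξ|² |û|` by the Fourier transform of `𝓛u`, that is,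
to prove ellipticity of the symbol `μ |ξ|² + (λ + μ) ξ ⊗ ξ`. Pairing the symbol with `ξ` multiplies
the longitudinal component `⟨ξ, û⟩` by `(λ + 2μ) |ξ|²`, so this component is controlled first, and
then `μ |ξ|² û` is controlled by difference.
-/

open scoped SchwartzMap FourierTransform LineDeriv Laplacian Real

section Optimization

open Filter Topology

theorem div_rpow_neg_mul_add_div_mul {a b : ℝ≥0} (ha : a ≠ 0) (hb : b ≠ 0) (θ : ℝ) :
    (a / b) ^ (-θ) * (a + a / b * b) = 2 * a ^ (1 - θ) * b ^ θ := by
  rw [div_mul_cancel₀ _ hb, NNReal.div_rpow, NNReal.rpow_neg b, div_inv_eq_mul,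
    sub_eq_add_neg, NNReal.rpow_add ha, NNReal.rpow_one]
  ring

theorem le_two_mul_rpow_mul_rpow_of_forall_le {θ : ℝ} (hθ₀ : 0 ≤ θ) (hθ₁ : θ ≤ 1) {K A B : ℝ≥0}
    {X : ℝ≥0∞} (h : ∀ t : ℝ≥0, t ≠ 0 → X ≤ (K * t ^ (-θ) * (A + t * B) : ℝ≥0)) :
    X ≤ (2 * K * A ^ (1 - θ) * B ^ θ : ℝ≥0) := by
  -- The minimizer `t = A / B` is only available after `A` and `B` are perturbed to be positive.
  set bound : ℝ≥0 → ℝ≥0 := fun ε => 2 * K * (A + ε) ^ (1 - θ) * (B + ε) ^ θ with hbound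
  have hlim : Tendsto (fun ε => (bound ε : ℝ≥0∞)) (𝓝[>] 0) (𝓝 (bound 0)) := by
    have hcont : Continuous bound :=
      (continuous_const.mul <| (NNReal.continuous_rpow_const (sub_nonneg.2 hθ₁)).comp
        (continuous_const_add A)).mul
        ((NNReal.continuous_rpow_const hθ₀).comp (continuous_const_add B))
    exact ((ENNReal.continuous_coe.comp hcont).tendsto 0).mono_left nhdsWithin_le_nhds
  have hle : ∀ ε > 0, X ≤ bound ε := fun ε hε => by
    have ha : A + ε ≠ 0 := by positivity
    have hb : B + ε ≠ 0 := by positivity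
    refine (h _ (div_ne_zero ha hb)).trans (ENNReal.coe_le_coe.2 ?_)
    calc K * ((A + ε) / (B + ε)) ^ (-θ) * (A + (A + ε) / (B + ε) * B)
        ≤ K * ((A + ε) / (B + ε)) ^ (-θ) * ((A + ε) + (A + ε) / (B + ε) * (B + ε)) := by
          gcongr <;> exact le_self_add
      _ = bound ε := by
          rw [mul_assoc, div_rpow_neg_mul_add_div_mul ha hb, hbound]
          ring
  simpa [hbound] using ge_of_tendsto hlim (eventually_mem_nhdsWithin.mono hle)

end Optimization

section Carlson

open Module

variable {E F : Type*} [NormedAddCommGroup F]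

theorem eLpNorm_one_add_mul_smul_le {α : Type*} {mα : MeasurableSpace α} {ν : Measure α}
    [NormedSpace ℝ F] {f : α → F} {w : α → ℝ} (hf : AEStronglyMeasurable f ν)
    (hw : AEStronglyMeasurable w ν) (t : ℝ≥0) {p : ℝ≥0∞} (hp : 1 ≤ p) :
    eLpNorm (fun x => (1 + t * w x) • f x) p ν ≤
      eLpNorm f p ν + t * eLpNorm (fun x => w x • f x) p ν :=
  calc eLpNorm (fun x => (1 + t * w x) • f x) p ν
      = eLpNorm (f + (t : ℝ) • fun x => w x • f x) p ν := by
        congr 1 with x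
        simp [add_smul, mul_smul]
    _ ≤ eLpNorm f p ν + eLpNorm ((t : ℝ) • fun x => w x • f x) p ν :=
        eLpNorm_add_le hf ((hw.smul hf).const_smul _) hp
    _ = eLpNorm f p ν + t * eLpNorm (fun x => w x • f x) p ν := by simp [eLpNorm_const_smul]

variable [NormedAddCommGroup E] [NormedSpace ℝ E] [FiniteDimensional ℝ E] [MeasurableSpace E]
  [BorelSpace E] {ν : Measure E} [ν.IsAddHaarMeasure]

theorem eLpNorm_comp_smul_addHaar {r : ℝ≥0} (hr : r ≠ 0) (f : E → F) (p : ℝ≥0∞) :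
    eLpNorm (fun x => f (r • x)) p ν = (r ^ (-(finrank ℝ E / p.toReal)) : ℝ≥0) * eLpNorm f p ν := by
  have hmap : ν.map (fun x => r • x) = (r ^ finrank ℝ E)⁻¹ • ν := by
    have h := Measure.map_addHaar_smul ν (NNReal.coe_ne_zero.2 hr)
    rwa [abs_of_nonneg (by positivity), ← NNReal.coe_pow, ← NNReal.coe_inv,
      ENNReal.ofReal_coe_nnreal] at h
  have hemb : MeasurableEmbedding fun x : E => r • x :=
    (Homeomorph.smulOfNeZero r hr).measurableEmbedding
  calc eLpNorm (fun x => f (r • x)) p ν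
      = eLpNorm f p ((r ^ finrank ℝ E)⁻¹ • ν) := by
        rw [← hmap, hemb.eLpNorm_map_measure, Function.comp_def]
    _ = _ := by
        rw [eLpNorm_smul_measure_of_ne_zero' (by positivity), ENNReal.smul_def, smul_eq_mul,
          ← NNReal.rpow_natCast, ← NNReal.rpow_neg, ← NNReal.rpow_mul, neg_mul, div_eq_mul_inv]

theorem memLp_two_inv_one_add_norm_pow {m : ℕ} (hm : finrank ℝ E < 2 * m) :
    MemLp (fun x : E => (1 + ‖x‖ ^ m)⁻¹) 2 ν := by
  have hbracket : MemLp (fun x : E => (1 + ‖x‖) ^ (-m : ℝ)) 2 ν := by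
    have hcont : Continuous fun x : E => (1 + ‖x‖) ^ (-m : ℝ) :=
      Continuous.rpow_const (by fun_prop) fun x => .inl (by positivity)
    rw [memLp_two_iff_integrable_sq hcont.aestronglyMeasurable]
    refine (integrable_one_add_norm (r := 2 * m) (mod_cast hm)).congr (.of_forall fun x => ?_)
    dsimp only
    rw [← Real.rpow_natCast, ← Real.rpow_mul (by positivity)]
    congr 1
    push_cast
    ring
  refine hbracket.of_le_mul (c := 2 ^ (m - 1)) ?_ (.of_forall fun x => ?_)
  · exact (Continuous.inv₀ (by fun_prop) fun x => by positivity).aestronglyMeasurable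
  have hpow : (1 + ‖x‖) ^ m ≤ 2 ^ (m - 1) * (1 + ‖x‖ ^ m) := by
    simpa using add_pow_le zero_le_one (norm_nonneg x) m
  rw [Real.norm_of_nonneg (by positivity), Real.norm_of_nonneg (by positivity),
    Real.rpow_neg (by positivity), Real.rpow_natCast, ← div_eq_mul_inv,
    inv_le_comm₀ (by positivity) (by positivity), inv_div, div_le_iff₀' (by positivity)]
  exact hpow

theorem eLpNorm_two_inv_one_add_mul_norm_pow {m : ℕ} (hm : m ≠ 0) {t : ℝ≥0} (ht : t ≠ 0) :
    eLpNorm (fun x : E => (1 + t * ‖x‖ ^ m)⁻¹) 2 ν =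
      (t ^ (-(finrank ℝ E / (2 * m) : ℝ)) : ℝ≥0) * eLpNorm (fun x : E => (1 + ‖x‖ ^ m)⁻¹) 2 ν := by
  set r : ℝ≥0 := t ^ (m : ℝ)⁻¹ with hr
  have hr₀ : r ≠ 0 := (NNReal.rpow_pos (pos_iff_ne_zero.2 ht)).ne'
  have hrm : r ^ m = t := NNReal.rpow_inv_natCast_pow t hm
  have hrn : r ^ (-(finrank ℝ E / (2 : ℝ≥0∞).toReal)) = t ^ (-(finrank ℝ E / (2 * m) : ℝ)) := by
    rw [hr, ← NNReal.rpow_mul, ENNReal.toReal_ofNat]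
    congr 1
    field_simp
  rw [← hrn, ← eLpNorm_comp_smul_addHaar hr₀]
  simp only [NNReal.smul_def, norm_smul, mul_pow, NNReal.norm_eq, ← NNReal.coe_pow, hrm]

theorem exists_eLpNorm_one_le_rpow_mul_add [NormedSpace ℝ F] {m : ℕ} (hm : finrank ℝ E < 2 * m) :
    ∃ K : ℝ≥0, ∀ f : E → F, AEStronglyMeasurable f ν → ∀ t : ℝ≥0, t ≠ 0 →
      eLpNorm f 1 ν ≤ (K * t ^ (-(finrank ℝ E / (2 * m) : ℝ)) : ℝ≥0) *
        (eLpNorm f 2 ν + t * eLpNorm (fun x => ‖x‖ ^ m • f x) 2 ν) := by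
  have hw : eLpNorm (fun x : E => (1 + ‖x‖ ^ m)⁻¹) 2 ν ≠ ⊤ :=
    (memLp_two_inv_one_add_norm_pow hm).eLpNorm_ne_top
  refine ⟨(eLpNorm (fun x : E => (1 + ‖x‖ ^ m)⁻¹) 2 ν).toNNReal, fun f hf t ht => ?_⟩
  have hfactor : f = (fun x : E => (1 + t * ‖x‖ ^ m)⁻¹) • fun x => (1 + t * ‖x‖ ^ m) • f x := by
    ext x
    have hpos : (0 : ℝ) < 1 + t * ‖x‖ ^ m := by positivity
    simp [inv_smul_smul₀ hpos.ne']
  have hweight : Continuous fun x : E => 1 + t * ‖x‖ ^ m := by fun_prop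
  have hinv : Continuous fun x : E => (1 + t * ‖x‖ ^ m)⁻¹ := hweight.inv₀ fun x => by positivity
  calc eLpNorm f 1 ν
      ≤ eLpNorm (fun x : E => (1 + t * ‖x‖ ^ m)⁻¹) 2 ν *
          eLpNorm (fun x => (1 + t * ‖x‖ ^ m) • f x) 2 ν := by
        conv_lhs => rw [hfactor]
        exact eLpNorm_smul_le_mul_eLpNorm (hweight.aestronglyMeasurable.smul hf)
          hinv.aestronglyMeasurable
    _ ≤ _ := by
        rw [eLpNorm_two_inv_one_add_mul_norm_pow (by omega) ht, ENNReal.coe_mul,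
          ENNReal.coe_toNNReal hw, mul_comm (eLpNorm _ 2 ν)]
        gcongr
        exact eLpNorm_one_add_mul_smul_le hf (Continuous.aestronglyMeasurable (by fun_prop)) t
          one_le_two

theorem exists_eLpNorm_one_le_rpow_mul_rpow [NormedSpace ℝ F] {m : ℕ} (hm : finrank ℝ E < 2 * m) :
    ∃ C : ℝ≥0, ∀ f : E → F, MemLp f 2 ν → MemLp (fun x => ‖x‖ ^ m • f x) 2 ν →
      eLpNorm f 1 ν ≤ C * eLpNorm f 2 ν ^ (1 - finrank ℝ E / (2 * m) : ℝ) *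
        eLpNorm (fun x => ‖x‖ ^ m • f x) 2 ν ^ (finrank ℝ E / (2 * m) : ℝ) := by
  obtain ⟨K, hK⟩ := exists_eLpNorm_one_le_rpow_mul_add (F := F) (ν := ν) hm
  have hθ₀ : (0 : ℝ) ≤ finrank ℝ E / (2 * m) := by positivity
  have hθ₁ : (finrank ℝ E / (2 * m) : ℝ) ≤ 1 := div_le_one_of_le₀ (mod_cast hm.le) (by positivity)
  refine ⟨2 * K, fun f hf hmf => ?_⟩
  lift eLpNorm f 2 ν to ℝ≥0 using hf.eLpNorm_ne_top with A hA
  lift eLpNorm (fun x => ‖x‖ ^ m • f x) 2 ν to ℝ≥0 using hmf.eLpNorm_ne_top with B hB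
  rw [← ENNReal.coe_rpow_of_nonneg _ hθ₀, ← ENNReal.coe_rpow_of_nonneg _ (sub_nonneg.2 hθ₁)]
  refine mod_cast le_two_mul_rpow_mul_rpow_of_forall_le hθ₀ hθ₁ fun t ht => ?_
  simpa [← hA, ← hB] using hK f hf.aestronglyMeasurable t ht

end Carlson

section Fourier

open Module

variable {V : Type*} [NormedAddCommGroup V] [InnerProductSpace ℝ V] [FiniteDimensional ℝ V]
  [MeasurableSpace V] [BorelSpace V]

theorem eLpNorm_top_le_eLpNorm_one_fourier {F : Type*} [NormedAddCommGroup F] [NormedSpace ℂ F]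
    [CompleteSpace F] (f : 𝓢(V, F)) :
    eLpNorm f ⊤ volume ≤ eLpNorm (𝓕 f : 𝓢(V, F)) 1 volume := by
  rw [eLpNorm_exponent_top]
  refine eLpNormEssSup_le_of_ae_enorm_bound (.of_forall fun x => ?_)
  have hinv : f x = 𝓕 (𝓕 f : 𝓢(V, F)) (-x) := by
    conv_lhs => rw [← FourierPair.fourierInv_fourier_eq (F := 𝓢(V, F)) f]
    rw [SchwartzMap.fourierInv_coe, Real.fourierInv_eq_fourier_neg, ← SchwartzMap.fourier_coe]
  have hfin : eLpNorm (𝓕 f : 𝓢(V, F)) 1 volume ≠ ⊤ :=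
    ((𝓕 f : 𝓢(V, F)).memLp 1 volume).eLpNorm_ne_top
  rw [hinv, ← ofReal_norm, ← ENNReal.ofReal_toReal hfin, ← SchwartzMap.norm_toLp]
  exact ENNReal.ofReal_le_ofReal (SchwartzMap.norm_fourier_apply_le_toLp_one _ _)

variable {F G : Type*} [NormedAddCommGroup F] [InnerProductSpace ℂ F] [CompleteSpace F]
  [NormedAddCommGroup G] [InnerProductSpace ℂ G] [CompleteSpace G]

theorem eLpNorm_two_fourier (f : 𝓢(V, F)) :
    eLpNorm (𝓕 f : 𝓢(V, F)) 2 volume = eLpNorm f 2 volume := by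
  rw [← ENNReal.toReal_eq_toReal_iff' ((𝓕 f : 𝓢(V, F)).memLp 2 volume).eLpNorm_ne_top
    (f.memLp 2 volume).eLpNorm_ne_top, ← SchwartzMap.norm_toLp, ← SchwartzMap.norm_toLp,
    SchwartzMap.norm_fourier_toL2_eq]

theorem exists_eLpNorm_top_le_of_norm_pow_mul_fourier_le {m : ℕ} (hm : finrank ℝ V < 2 * m)
    (c : ℝ≥0) :
    ∃ C : ℝ≥0, ∀ (f : 𝓢(V, F)) (g : 𝓢(V, G)), (∀ ξ, ‖ξ‖ ^ m * ‖𝓕 f ξ‖ ≤ c * ‖𝓕 g ξ‖) →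
      eLpNorm f ⊤ volume ≤ C * eLpNorm f 2 volume ^ (1 - finrank ℝ V / (2 * m) : ℝ) *
        eLpNorm g 2 volume ^ (finrank ℝ V / (2 * m) : ℝ) := by
  obtain ⟨C, hC⟩ := exists_eLpNorm_one_le_rpow_mul_rpow (F := F) (ν := (volume : Measure V)) hm
  set θ : ℝ := finrank ℝ V / (2 * m)
  have hθ : 0 ≤ θ := by positivity
  refine ⟨C * c ^ θ, fun f g hfg => ?_⟩
  have hle : ∀ᵐ ξ, ‖‖ξ‖ ^ m • 𝓕 f ξ‖ ≤ c * ‖𝓕 g ξ‖ :=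
    .of_forall fun ξ => by simpa [norm_smul] using hfg ξ
  have hmeas : AEStronglyMeasurable (fun ξ => ‖ξ‖ ^ m • 𝓕 f ξ) volume :=
    Continuous.aestronglyMeasurable (by have := (𝓕 f : 𝓢(V, F)).continuous; fun_prop)
  have hLp : MemLp (fun ξ => ‖ξ‖ ^ m • 𝓕 f ξ) 2 volume :=
    ((𝓕 g : 𝓢(V, G)).memLp 2 volume).of_le_mul hmeas hle
  calc eLpNorm f ⊤ volume
      ≤ eLpNorm (𝓕 f : 𝓢(V, F)) 1 volume := eLpNorm_top_le_eLpNorm_one_fourier f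
    _ ≤ C * eLpNorm (𝓕 f : 𝓢(V, F)) 2 volume ^ (1 - θ) *
          eLpNorm (fun ξ => ‖ξ‖ ^ m • 𝓕 f ξ) 2 volume ^ θ :=
        hC _ ((𝓕 f : 𝓢(V, F)).memLp 2 volume) hLp
    _ ≤ C * eLpNorm (𝓕 f : 𝓢(V, F)) 2 volume ^ (1 - θ) *
          (c * eLpNorm (𝓕 g : 𝓢(V, G)) 2 volume) ^ θ := by
        gcongr
        exact eLpNorm_le_nnreal_smul_eLpNorm_of_ae_le_mul hle 2
    _ = (C * c ^ θ : ℝ≥0) * eLpNorm f 2 volume ^ (1 - θ) * eLpNorm g 2 volume ^ θ := by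
        rw [eLpNorm_two_fourier, eLpNorm_two_fourier, ENNReal.mul_rpow_of_nonneg _ _ hθ,
          ENNReal.coe_mul, ENNReal.coe_rpow_of_nonneg _ hθ]
        ring

end Fourier

section FourierCalculus

variable {V E F : Type*} [NormedAddCommGroup V] [InnerProductSpace ℝ V] [FiniteDimensional ℝ V]
  [MeasurableSpace V] [BorelSpace V] [NormedAddCommGroup E] [NormedSpace ℂ E]
  [NormedAddCommGroup F] [NormedSpace ℂ F]

theorem fourier_lineDerivOp_apply (f : 𝓢(V, F)) (v ξ : V) :
    𝓕 (∂_{v} f) ξ = (2 * π * Complex.I * inner ℝ ξ v) • 𝓕 f ξ := by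
  have hinner : (fun x : V => inner ℝ x v).HasTemperateGrowth := by fun_prop
  rw [SchwartzMap.fourier_lineDerivOp_eq, smul_apply, SchwartzMap.smulLeftCLM_apply_apply hinner,
    ← Complex.coe_smul, smul_smul]

theorem fourier_laplacian_apply [CompleteSpace F] (f : 𝓢(V, F)) (ξ : V) :
    𝓕 (Δ f) ξ = -((2 * π) ^ 2 * ‖ξ‖ ^ 2 : ℂ) • 𝓕 f ξ := by
  have hsq : (fun x : V => ‖x‖ ^ 2).HasTemperateGrowth := by fun_prop
  rw [SchwartzMap.laplacian_eq_fourierMultiplierCLM, FourierTransform.fourier_smul,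
    SchwartzMap.fourierMultiplierCLM_apply, FourierTransform.fourier_fourierInv_eq, smul_apply,
    SchwartzMap.smulLeftCLM_apply_apply hsq, smul_smul, ← Complex.coe_smul]
  push_cast
  ring_nf

theorem fourier_postcompCLM_apply [CompleteSpace E] [CompleteSpace F] (L : E →L[ℂ] F)
    (f : 𝓢(V, E)) (ξ : V) : 𝓕 (f.postcompCLM L) ξ = L (𝓕 f ξ) := by
  have hint : Integrable (fun x => Real.fourierChar (-inner ℝ x ξ) • f x) :=
    (Real.fourierIntegral_convergent_iff ξ).2 f.integrable
  rw [SchwartzMap.fourier_coe, SchwartzMap.fourier_coe, Real.fourier_eq, Real.fourier_eq,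
    ← L.integral_comp_comm hint]
  simp [Circle.smul_def]

end FourierCalculus

theorem lineDerivOp_postcompCLM {𝕜 V E F : Type*} [RCLike 𝕜] [NormedAddCommGroup V]
    [NormedSpace ℝ V] [NormedAddCommGroup E] [NormedSpace ℝ E] [NormedSpace 𝕜 E]
    [NormedAddCommGroup F] [NormedSpace ℝ F] [NormedSpace 𝕜 F] (L : E →L[𝕜] F) (f : 𝓢(V, E))
    (v : V) : ∂_{v} (f.postcompCLM L) = (∂_{v} f).postcompCLM L := by
  ext x
  have hderiv : fderiv ℝ (f.postcompCLM L) x = (L.restrictScalars ℝ).comp (fderiv ℝ f x) :=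
    ((L.restrictScalars ℝ).hasFDerivAt.comp x (f.hasFDerivAt x)).fderiv
  rw [SchwartzMap.postcompCLM_apply, SchwartzMap.lineDerivOp_apply_eq_fderiv,
    SchwartzMap.lineDerivOp_apply_eq_fderiv, hderiv]
  rfl

section Symbol

open scoped InnerProductSpace

variable {𝕜 H : Type*} [RCLike 𝕜] [NormedAddCommGroup H] [InnerProductSpace 𝕜 H]

/-- The symbol `μ |ξ|² + (λ + μ) ξ ⊗ ξ` of the operator `-𝓛` at the frequency `ξ`, applied to the
vector `z`; frequencies are normalized so that `∂ⱼ` has symbol `i ξⱼ`. -/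
def lameSymbol (μ lam : 𝕜) (ξ z : H) : H :=
  (μ * ‖ξ‖ ^ 2) • z + ((lam + μ) * ⟪ξ, z⟫_𝕜) • ξ

theorem inner_lameSymbol (μ lam : 𝕜) (ξ z : H) :
    ⟪ξ, lameSymbol μ lam ξ z⟫_𝕜 = (lam + 2 * μ) * ‖ξ‖ ^ 2 * ⟪ξ, z⟫_𝕜 := by
  rw [lameSymbol, inner_add_right, inner_smul_right, inner_smul_right, inner_self_eq_norm_sq_to_K]
  ring

theorem norm_mul_norm_inner_le_norm_lameSymbol {μ lam : 𝕜} (hν : lam + 2 * μ ≠ 0) (ξ z : H) :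
    ‖ξ‖ * ‖⟪ξ, z⟫_𝕜‖ ≤ ‖lameSymbol μ lam ξ z‖ / ‖lam + 2 * μ‖ := by
  rcases eq_or_ne ξ 0 with rfl | hξ
  · simp only [norm_zero, zero_mul]
    positivity
  have hξ₀ : 0 < ‖ξ‖ := norm_pos_iff.2 hξ
  rw [le_div_iff₀ (norm_pos_iff.2 hν)]
  refine le_of_mul_le_mul_left ?_ hξ₀
  calc ‖ξ‖ * (‖ξ‖ * ‖⟪ξ, z⟫_𝕜‖ * ‖lam + 2 * μ‖) = ‖⟪ξ, lameSymbol μ lam ξ z⟫_𝕜‖ := by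
        rw [inner_lameSymbol, norm_mul, norm_mul, norm_pow, RCLike.norm_ofReal, abs_norm]
        ring
    _ ≤ ‖ξ‖ * ‖lameSymbol μ lam ξ z‖ := norm_inner_le_norm _ _

theorem norm_sq_mul_norm_le_norm_lameSymbol {μ lam : 𝕜} (hμ : μ ≠ 0) (hν : lam + 2 * μ ≠ 0)
    (ξ z : H) :
    ‖ξ‖ ^ 2 * ‖z‖ ≤ (1 + ‖lam + μ‖ / ‖lam + 2 * μ‖) / ‖μ‖ * ‖lameSymbol μ lam ξ z‖ := by
  set w := lameSymbol μ lam ξ z with hw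
  have hz : (μ * ‖ξ‖ ^ 2) • z = w - ((lam + μ) * ⟪ξ, z⟫_𝕜) • ξ := by rw [hw, lameSymbol]; abel
  rw [div_mul_eq_mul_div, le_div_iff₀ (norm_pos_iff.2 hμ)]
  calc ‖ξ‖ ^ 2 * ‖z‖ * ‖μ‖ = ‖(μ * ‖ξ‖ ^ 2) • z‖ := by
        rw [norm_smul, norm_mul, norm_pow, RCLike.norm_ofReal, abs_norm]
        ring
    _ ≤ ‖w‖ + ‖((lam + μ) * ⟪ξ, z⟫_𝕜) • ξ‖ := hz ▸ norm_sub_le _ _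
    _ = ‖w‖ + ‖lam + μ‖ * (‖ξ‖ * ‖⟪ξ, z⟫_𝕜‖) := by
        rw [norm_smul, norm_mul]
        ring
    _ ≤ ‖w‖ + ‖lam + μ‖ * (‖w‖ / ‖lam + 2 * μ‖) := by
        gcongr
        exact norm_mul_norm_inner_le_norm_lameSymbol hν ξ z
    _ = (1 + ‖lam + μ‖ / ‖lam + 2 * μ‖) * ‖w‖ := by ring

end Symbol

section Lame

open scoped InnerProductSpace

variable {ι : Type*} [Fintype ι]

/-- The inclusion `ℝ^ι ⊆ ℂ^ι`, which brings real vector fields to the Fourier transform. -/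
def complexify : EuclideanSpace ℝ ι →ₗᵢ[ℝ] EuclideanSpace ℂ ι where
  toFun x := WithLp.toLp 2 fun i => (x i : ℂ)
  map_add' x y := by ext i; simp
  map_smul' c x := by ext i; simp
  norm_map' x := by simp [EuclideanSpace.norm_eq]

@[simp]
theorem complexify_apply (x : EuclideanSpace ℝ ι) (i : ι) : complexify x i = x i := rfl

theorem inner_complexify_left (x : EuclideanSpace ℝ ι) (z : EuclideanSpace ℂ ι) :
    ⟪complexify x, z⟫_ℂ = ∑ i, x i * z i := by
  simp [PiLp.inner_apply, mul_comm]

variable [DecidableEq ι]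

/-- The partial derivative `∂ᵢ f` of a Schwartz function. -/
abbrev partialDeriv {F : Type*} [NormedAddCommGroup F] [NormedSpace ℝ F] (i : ι)
    (f : 𝓢(EuclideanSpace ℝ ι, F)) : 𝓢(EuclideanSpace ℝ ι, F) :=
  ∂_{EuclideanSpace.single i (1 : ℝ)} f

/-- The divergence `∑ⱼ ∂ⱼ fⱼ` of a complex Schwartz vector field on `ℝ^ι`. -/
def schwartzDiv (f : 𝓢(EuclideanSpace ℝ ι, EuclideanSpace ℂ ι)) : 𝓢(EuclideanSpace ℝ ι, ℂ) :=
  ∑ j, partialDeriv j (f.postcompCLM (EuclideanSpace.proj (𝕜 := ℂ) j))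

/-- The gradient `∑ᵢ ∂ᵢ g eᵢ` of a complex Schwartz function on `ℝ^ι`. -/
def schwartzGrad (g : 𝓢(EuclideanSpace ℝ ι, ℂ)) : 𝓢(EuclideanSpace ℝ ι, EuclideanSpace ℂ ι) :=
  ∑ i, (partialDeriv i g).postcompCLM
    (ContinuousLinearMap.toSpanSingleton ℂ (EuclideanSpace.single i (1 : ℂ)))

/-- The Lamé operator `μΔf + (λ+μ)∇(div f)` on complex Schwartz vector fields, the form of `lame` to
which the Fourier transform applies. -/
def schwartzLame (μ lam : ℂ) (f : 𝓢(EuclideanSpace ℝ ι, EuclideanSpace ℂ ι)) :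
    𝓢(EuclideanSpace ℝ ι, EuclideanSpace ℂ ι) :=
  μ • Δ f + (lam + μ) • schwartzGrad (schwartzDiv f)

theorem fourier_partialDeriv_apply {F : Type*} [NormedAddCommGroup F] [NormedSpace ℂ F] (i : ι)
    (f : 𝓢(EuclideanSpace ℝ ι, F)) (ξ : EuclideanSpace ℝ ι) :
    𝓕 (partialDeriv i f) ξ = (2 * π * Complex.I * ξ i) • 𝓕 f ξ := by
  rw [fourier_lineDerivOp_apply, EuclideanSpace.inner_single_right]
  simp

theorem fourier_schwartzDiv_apply (f : 𝓢(EuclideanSpace ℝ ι, EuclideanSpace ℂ ι))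
    (ξ : EuclideanSpace ℝ ι) :
    𝓕 (schwartzDiv f) ξ = 2 * π * Complex.I * ⟪complexify ξ, 𝓕 f ξ⟫_ℂ := by
  rw [schwartzDiv, ← SchwartzMap.fourierTransformCLM_apply (𝕜 := ℂ), map_sum, sum_apply,
    inner_complexify_left, Finset.mul_sum]
  refine Finset.sum_congr rfl fun j _ => ?_
  rw [SchwartzMap.fourierTransformCLM_apply, fourier_partialDeriv_apply,
    fourier_postcompCLM_apply]
  simp [mul_assoc]

theorem fourier_schwartzGrad_apply (g : 𝓢(EuclideanSpace ℝ ι, ℂ)) (ξ : EuclideanSpace ℝ ι) :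
    𝓕 (schwartzGrad g) ξ = (2 * π * Complex.I * 𝓕 g ξ) • complexify ξ := by
  ext i
  rw [schwartzGrad, ← SchwartzMap.fourierTransformCLM_apply (𝕜 := ℂ), map_sum, sum_apply]
  simp [fourier_postcompCLM_apply, fourier_partialDeriv_apply, Pi.single_apply, mul_right_comm]

theorem fourier_schwartzLame_apply (μ lam : ℂ)
    (f : 𝓢(EuclideanSpace ℝ ι, EuclideanSpace ℂ ι)) (ξ : EuclideanSpace ℝ ι) :
    𝓕 (schwartzLame μ lam f) ξ =
      -((2 * π) ^ 2 : ℂ) • lameSymbol μ lam (complexify ξ) (𝓕 f ξ) := by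
  rw [schwartzLame, lameSymbol, FourierTransform.fourier_add, FourierTransform.fourier_smul,
    FourierTransform.fourier_smul, add_apply, smul_apply, smul_apply, fourier_laplacian_apply,
    fourier_schwartzGrad_apply, fourier_schwartzDiv_apply, LinearIsometry.norm_map]
  simp only [smul_add, smul_smul, RCLike.ofReal_eq_complex_ofReal]
  congr 2
  · ring
  · linear_combination 4 * (lam + μ) * π ^ 2 * ⟪complexify ξ, 𝓕 f ξ⟫_ℂ * Complex.I_sq

theorem exists_norm_sq_mul_norm_fourier_le_norm_fourier_schwartzLame {μ lam : ℂ} (hμ : μ ≠ 0)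
    (hν : lam + 2 * μ ≠ 0) :
    ∃ c : ℝ≥0, ∀ (f : 𝓢(EuclideanSpace ℝ ι, EuclideanSpace ℂ ι)) (ξ : EuclideanSpace ℝ ι),
      ‖ξ‖ ^ 2 * ‖𝓕 f ξ‖ ≤ c * ‖𝓕 (schwartzLame μ lam f) ξ‖ := by
  refine ⟨(1 + ‖lam + μ‖₊ / ‖lam + 2 * μ‖₊) / ‖μ‖₊ / (2 * NNReal.pi) ^ 2, fun f ξ => ?_⟩
  have hnorm : ‖𝓕 (schwartzLame μ lam f) ξ‖ =
      (2 * π) ^ 2 * ‖lameSymbol μ lam (complexify ξ) (𝓕 f ξ)‖ := by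
    rw [fourier_schwartzLame_apply, norm_smul, norm_neg]
    simp [abs_of_pos Real.pi_pos]
  calc ‖ξ‖ ^ 2 * ‖𝓕 f ξ‖ = ‖complexify ξ‖ ^ 2 * ‖𝓕 f ξ‖ := by rw [LinearIsometry.norm_map]
    _ ≤ (1 + ‖lam + μ‖ / ‖lam + 2 * μ‖) / ‖μ‖ * ‖lameSymbol μ lam (complexify ξ) (𝓕 f ξ)‖ :=
        norm_sq_mul_norm_le_norm_lameSymbol hμ hν _ _
    _ = _ := by
        rw [hnorm]
        push_cast [NNReal.coe_real_pi]
        field_simp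

theorem schwartzGrad_apply_apply (g : 𝓢(EuclideanSpace ℝ ι, ℂ)) (x : EuclideanSpace ℝ ι) (i : ι) :
    schwartzGrad g x i = partialDeriv i g x := by
  simp [schwartzGrad, sum_apply, Pi.single_apply]

theorem laplacian_apply_apply (f : 𝓢(EuclideanSpace ℝ ι, EuclideanSpace ℂ ι))
    (x : EuclideanSpace ℝ ι) (i : ι) :
    Δ f x i =
      ∑ j, partialDeriv j (partialDeriv j (f.postcompCLM (EuclideanSpace.proj (𝕜 := ℂ) i))) x := by
  rw [SchwartzMap.laplacian_eq_sum (EuclideanSpace.basisFun ι ℝ), sum_apply]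
  simp [lineDerivOp_postcompCLM]

end Lame

section RealFields

variable {n : ℕ}

theorem partialDeriv_eq_ofReal_pdv {f : 𝓢(En n, ℂ)} {g : En n → ℝ} (h : ∀ x, f x = g x)
    (i : Fin n) (x : En n) : partialDeriv i f x = pdv i g x := by
  have hre : g = Complex.reCLM ∘ f := funext fun y => by simp [h y]
  have hg : HasFDerivAt g (Complex.reCLM.comp (fderiv ℝ f x)) x :=
    hre ▸ Complex.reCLM.hasFDerivAt.comp x (f.hasFDerivAt x)
  have hf : HasFDerivAt f (Complex.ofRealCLM.comp (fderiv ℝ g x)) x :=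
    (funext h : ⇑f = Complex.ofRealCLM ∘ g) ▸
      Complex.ofRealCLM.hasFDerivAt.comp x hg.differentiableAt.hasFDerivAt
  rw [SchwartzMap.lineDerivOp_apply_eq_fderiv, hf.fderiv]
  rfl

theorem schwartzLame_postcompCLM_complexify_apply (μ lam : ℝ) (u : 𝓢(En n, En n)) (x : En n) :
    schwartzLame μ lam (u.postcompCLM complexify.toContinuousLinearMap) x =
      complexify (lame μ lam u x) := by
  ext i
  set f := u.postcompCLM (complexify (ι := Fin n)).toContinuousLinearMap
  have hcoord (j : Fin n) (y : En n) :
      f.postcompCLM (EuclideanSpace.proj (𝕜 := ℂ) j) y = (u y j : ℝ) := rfl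
  have hlap : Δ f x i = (∑ j, pdv j (fun y => pdv j (fun z => u z i) y) x : ℝ) := by
    rw [laplacian_apply_apply, Complex.ofReal_sum]
    exact Finset.sum_congr rfl fun j _ =>
      partialDeriv_eq_ofReal_pdv (partialDeriv_eq_ofReal_pdv (hcoord i) j) j x
  have hdiv (y : En n) : schwartzDiv f y = (∑ j, pdv j (fun z => u z j) y : ℝ) := by
    rw [schwartzDiv, sum_apply, Complex.ofReal_sum]
    exact Finset.sum_congr rfl fun j _ => partialDeriv_eq_ofReal_pdv (hcoord j) j y
  rw [schwartzLame, add_apply, smul_apply, smul_apply, PiLp.add_apply, PiLp.smul_apply,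
    PiLp.smul_apply, hlap, schwartzGrad_apply_apply, partialDeriv_eq_ofReal_pdv hdiv]
  simp [lame]

end RealFields

theorem linfty_interpolation_lame_general (n : ℕ) (hn : n < 4) (μ lam : ℝ) (hμ : μ ≠ 0)
    (hν : lam + 2 * μ ≠ 0) :
    ∃ C : ℝ≥0, ∀ u : 𝓢(En n, En n),
      eLpNorm u ⊤ volume ≤
        C * (eLpNorm u 2 volume) ^ ((1 : ℝ) - n / 4) *
          (eLpNorm (lame μ lam u) 2 volume) ^ ((n : ℝ) / 4) := by
  obtain ⟨c, hc⟩ := exists_norm_sq_mul_norm_fourier_le_norm_fourier_schwartzLame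
    (ι := Fin n) (μ := μ) (lam := lam) (mod_cast hμ) (mod_cast hν)
  obtain ⟨C, hC⟩ := exists_eLpNorm_top_le_of_norm_pow_mul_fourier_le (V := En n) (m := 2)
    (F := EuclideanSpace ℂ (Fin n)) (G := EuclideanSpace ℂ (Fin n)) (by simpa using hn) c
  refine ⟨C, fun u => ?_⟩
  set f := u.postcompCLM (complexify (ι := Fin n)).toContinuousLinearMap
  have hu (p : ℝ≥0∞) : eLpNorm f p volume = eLpNorm u p volume :=
    eLpNorm_congr_norm_ae (.of_forall fun x => complexify.norm_map (u x))
  have hlame : eLpNorm (schwartzLame μ lam f) 2 volume = eLpNorm (lame μ lam u) 2 volume :=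
    eLpNorm_congr_norm_ae (.of_forall fun x => by
      rw [schwartzLame_postcompCLM_complexify_apply, LinearIsometry.norm_map])
  have hexp : (Module.finrank ℝ (En n) / (2 * (2 : ℕ)) : ℝ) = n / 4 := by
    rw [finrank_euclideanSpace_fin]
    norm_num
  have hinterp := hC f (schwartzLame μ lam f) (hc f)
  rwa [hexp, hu, hu, hlame] at hinterp

/-- Gagliardo–Nirenberg type inequality: for `n ∈ {2,3}` there is `C = C(n,μ,λ)` such
that every smooth compactly supported vector field `u` satisfies
`‖u‖_{L^∞} ≤ C ‖u‖_{L²}^{1−n/4} ‖𝓛u‖_{L²}^{n/4}`. -/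
theorem linfty_interpolation_lame (n : ℕ) (hn : n = 2 ∨ n = 3) (μ lam : ℝ)
    (hμ : 0 < μ) (hν : 0 < lam + 2 * μ) :
    ∃ C : ℝ≥0, ∀ u : En n → En n, ContDiff ℝ (⊤ : ℕ∞) u → HasCompactSupport u →
      eLpNorm u ⊤ volume ≤
        C * (eLpNorm u 2 volume) ^ ((1 : ℝ) - n / 4) *
          (eLpNorm (lame μ lam u) 2 volume) ^ ((n : ℝ) / 4) := by
  obtain ⟨C, hC⟩ := linfty_interpolation_lame_general n (by omega) μ lam hμ.ne' hν.ne'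
  exact ⟨C, fun u hu hsupp => hC (hsupp.toSchwartzMap hu)⟩
end
end

section
/- Let (X,‖·‖) be a real Banach space. Let A, with domain D(A) ⊆ X, generate a bounded analytic semigroup (T_A(t))_{t≥0} such that ‖T_A(t)x‖ → 0 as t → ∞ for every x ∈ X. Let B : X → X be a continuous linear bijection with continuous inverse B⁻¹. Assume that the composite operator S := B∘A, with domain D(A), generates a bounded analytic semigroup (T_S(t))_{t≥0} such that ‖T_S(t)x‖ → 0 as t → ∞ for every x ∈ X. Then for every s ∈ (0,1) and q ∈ [1,∞] there exist constants c, C > 0, independent of x, such that for every x ∈ X: c · ‖ t ↦ tˢ‖T_A(t)(B⁻¹x)‖ ‖_{L^q((0,∞), dt/t)} ≤ ‖ t ↦ tˢ‖T_S(t)x‖ ‖_{L^q((0,∞), dt/t)} ≤ C · ‖ t ↦ tˢ‖T_A(t)(B⁻¹x)‖ ‖_{L^q((0,∞), dt/t)}. -/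
open MeasureTheory
open scoped ENNReal NNReal

noncomputable section

variable {X : Type*} [NormedAddCommGroup X] [NormedSpace ℝ X] [CompleteSpace X]

/-- `S`, a linear operator defined on the subspace `D ⊆ X`, generates the bounded
analytic semigroup `(T(t))_{t≥0}` with constants `M, C₀`. -/
structure IsBAS (D : Set X) (S : X → X) (T : ℝ → X →L[ℝ] X) (M C₀ : ℝ) : Prop where
  zero_mem : (0 : X) ∈ D
  add_mem : ∀ x ∈ D, ∀ y ∈ D, x + y ∈ D
  smul_mem : ∀ (c : ℝ), ∀ x ∈ D, c • x ∈ D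
  map_add : ∀ x ∈ D, ∀ y ∈ D, S (x + y) = S x + S y
  map_smul : ∀ (c : ℝ), ∀ x ∈ D, S (c • x) = c • S x
  T_zero : T 0 = ContinuousLinearMap.id ℝ X
  T_semigroup : ∀ t : ℝ, 0 ≤ t → ∀ s : ℝ, 0 ≤ s → T (t + s) = (T t).comp (T s)
  T_cont : ∀ x : X, ContinuousOn (fun t : ℝ => T t x) (Set.Ici 0)
  T_bdd : ∀ t : ℝ, 0 ≤ t → ∀ x : X, ‖T t x‖ ≤ M * ‖x‖
  T_mem : ∀ x ∈ D, ∀ t : ℝ, 0 ≤ t → T t x ∈ D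
  T_comm : ∀ x ∈ D, ∀ t : ℝ, 0 ≤ t → S (T t x) = T t (S x)
  T_deriv : ∀ x ∈ D, ∀ t : ℝ, 0 ≤ t →
    HasDerivWithinAt (fun τ : ℝ => T τ x) (T t (S x)) (Set.Ici 0) t
  analytic_mem : ∀ x : X, ∀ t : ℝ, 0 < t → T t x ∈ D
  analytic_bdd : ∀ x : X, ∀ t : ℝ, 0 < t → t * ‖S (T t x)‖ ≤ C₀ * ‖x‖

/-- The (extended-real-valued) seminorm `‖x‖_{Ḃˢ} = ∫₀^∞ t^{−s/2}‖S(T(t)x)‖ dt`. -/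
def BsNorm (S : X → X) (T : ℝ → X →L[ℝ] X) (s : ℝ) (x : X) : ℝ≥0∞ :=
  ∫⁻ t in Set.Ioi (0 : ℝ), ENNReal.ofReal (t ^ (-s / 2) * ‖S (T t x)‖)

/-- The (extended-real-valued) seminorm `‖x‖_{Ḃ⁻ˢ} = ∫₀^∞ t^{s/2−1}‖T(t)x‖ dt`. -/
def BnegNorm (T : ℝ → X →L[ℝ] X) (s : ℝ) (x : X) : ℝ≥0∞ :=
  ∫⁻ t in Set.Ioi (0 : ℝ), ENNReal.ofReal (t ^ (s / 2 - 1) * ‖T t x‖)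


/-- The measure `dt/t` on `(0,∞)`. -/
def mulHaar : Measure ℝ :=
  (volume.restrict (Set.Ioi (0 : ℝ))).withDensity fun t => ENNReal.ofReal t⁻¹

/-!
For `S = B ∘ A` the weighted norm of `T_S(t)By` is compared with that of `T_A(t)y` through
`T_S(t)By = -2 ∫₀^∞ T_S(t)BA T_A(2r)y dr`. As `T_A(2r) = T_A(r)T_A(r)`, the integrand has two bounds,
up to constants: since `T_S(t)BA = S T_S(t)` on the domain, analyticity of `T_S` gives
`(1/t)‖T_A(r)y‖`, while analyticity of `T_A` gives `(1/r)‖T_A(r)y‖`. After multiplication by `tˢ`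
this is an integral inequality for `r ↦ rˢ‖T_A(r)y‖`, with kernel `min ((t/r)ˢ, (r/t)¹⁻ˢ)` relative
to `dr/r`. The integrals of this kernel over `r` and over `t` are both `1/(1-s) + 1/s`, so the Schur
test bounds it on every `L^q(dr/r)`. The reverse estimate is the same one for `A = B⁻¹ ∘ S`.

The integral formula requires `T_A(t)y → 0` as `t → ∞`. This holds as soon as the norm of
`t ↦ tˢ‖T_A(t)y‖` is finite, because `‖T_A(t)y‖` is decreasing up to a constant factor and `s > 0`.
-/

open Filter Set
open scoped Topology

section SchurTest

variable {α β : Type*} [MeasurableSpace α] [MeasurableSpace β] {μ : Measure α} {ν : Measure β}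

theorem rpow_lintegral_mul_le {k g : α → ℝ≥0∞} (hk : AEMeasurable k μ) (hg : AEMeasurable g μ)
    {p : ℝ} (hp : 1 ≤ p) :
    (∫⁻ r, k r * g r ∂μ) ^ p ≤ (∫⁻ r, k r ∂μ) ^ (p - 1) * ∫⁻ r, k r * g r ^ p ∂μ := by
  have hp0 : 0 < p := zero_lt_one.trans_le hp
  have hconj : 0 ≤ 1 - 1 / p := sub_nonneg.2 ((div_le_one hp0).2 hp)
  have hsplit (r : α) : k r * g r = k r ^ (1 - 1 / p) * (k r * g r ^ p) ^ (1 / p) := by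
    rw [ENNReal.mul_rpow_of_nonneg _ _ (by positivity), ← ENNReal.rpow_mul,
      mul_one_div_cancel hp0.ne', ENNReal.rpow_one, ← mul_assoc,
      ← ENNReal.rpow_add_of_nonneg _ _ hconj (by positivity), sub_add_cancel, ENNReal.rpow_one]
  calc (∫⁻ r, k r * g r ∂μ) ^ p
      = (∫⁻ r, k r ^ (1 - 1 / p) * (k r * g r ^ p) ^ (1 / p) ∂μ) ^ p := by simp_rw [← hsplit]
    _ ≤ ((∫⁻ r, k r ∂μ) ^ (1 - 1 / p) * (∫⁻ r, k r * g r ^ p ∂μ) ^ (1 / p)) ^ p := by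
        gcongr
        exact ENNReal.lintegral_mul_norm_pow_le hk (hk.mul (hg.pow_const p)) hconj
          (by positivity) (by ring)
    _ = (∫⁻ r, k r ∂μ) ^ (p - 1) * ∫⁻ r, k r * g r ^ p ∂μ := by
        rw [ENNReal.mul_rpow_of_nonneg _ _ hp0.le, ← ENNReal.rpow_mul, ← ENNReal.rpow_mul,
          one_div_mul_cancel hp0.ne', ENNReal.rpow_one, sub_mul, one_div_mul_cancel hp0.ne',
          one_mul]

variable {k : α → β → ℝ≥0∞} {a b : ℝ≥0∞}

theorem lintegral_rpow_lintegral_mul_le [SFinite μ] [SFinite ν]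
    (hk : Measurable (Function.uncurry k)) (hrow : ∀ᵐ t ∂μ, ∫⁻ r, k t r ∂ν ≤ a)
    (hcol : ∀ᵐ r ∂ν, ∫⁻ t, k t r ∂μ ≤ b) {g : β → ℝ≥0∞} (hg : AEMeasurable g ν)
    {p : ℝ} (hp : 1 ≤ p) :
    ∫⁻ t, (∫⁻ r, k t r * g r ∂ν) ^ p ∂μ ≤ a ^ (p - 1) * b * ∫⁻ r, g r ^ p ∂ν := by
  have hk_row (t : α) : Measurable (k t) := hk.comp measurable_prodMk_left
  have hk_col (r : β) : Measurable fun t => k t r := hk.comp measurable_prodMk_right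
  have hkg : AEMeasurable (fun z : α × β => k z.1 z.2 * g z.2 ^ p) (μ.prod ν) :=
    hk.aemeasurable.mul (hg.comp_snd.pow_const p)
  calc ∫⁻ t, (∫⁻ r, k t r * g r ∂ν) ^ p ∂μ
      ≤ ∫⁻ t, a ^ (p - 1) * ∫⁻ r, k t r * g r ^ p ∂ν ∂μ := by
        refine lintegral_mono_ae ?_
        filter_upwards [hrow] with t ht
        grw [rpow_lintegral_mul_le (hk_row t).aemeasurable hg hp, ht]
        exact sub_nonneg.2 hp
    _ = a ^ (p - 1) * ∫⁻ t, ∫⁻ r, k t r * g r ^ p ∂ν ∂μ :=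
        lintegral_const_mul'' _ hkg.lintegral_prod_right'
    _ = a ^ (p - 1) * ∫⁻ r, (∫⁻ t, k t r ∂μ) * g r ^ p ∂ν := by
        rw [lintegral_lintegral_swap hkg]
        simp_rw [lintegral_mul_const _ (hk_col _)]
    _ ≤ a ^ (p - 1) * ∫⁻ r, b * g r ^ p ∂ν := by
        gcongr 1
        refine lintegral_mono_ae ?_
        filter_upwards [hcol] with r hr
        gcongr
    _ = a ^ (p - 1) * b * ∫⁻ r, g r ^ p ∂ν := by
        rw [lintegral_const_mul'' _ (hg.pow_const p), mul_assoc]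

variable {E F : Type*} [ENorm E] [TopologicalSpace F] [ContinuousENorm F]

/-- **Schur test**. At `q = ∞` the exponent `1 / q.toReal` is `0`, so that the constant is `a`. -/
theorem eLpNorm_le_of_enorm_le_lintegral_kernel [SFinite μ] [SFinite ν]
    (hk : Measurable (Function.uncurry k)) (hrow : ∀ᵐ t ∂μ, ∫⁻ r, k t r ∂ν ≤ a)
    (hcol : ∀ᵐ r ∂ν, ∫⁻ t, k t r ∂μ ≤ b) {f : α → E} {g : β → F}
    (hg : AEStronglyMeasurable g ν) (hfg : ∀ᵐ t ∂μ, ‖f t‖ₑ ≤ ∫⁻ r, k t r * ‖g r‖ₑ ∂ν)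
    {q : ℝ≥0∞} (hq : 1 ≤ q) :
    eLpNorm f q μ ≤ a ^ (1 - 1 / q.toReal) * b ^ (1 / q.toReal) * eLpNorm g q ν := by
  rcases eq_or_ne q ∞ with rfl | hqtop
  · simp only [eLpNorm_exponent_top, ENNReal.toReal_top, div_zero, sub_zero, ENNReal.rpow_one,
      ENNReal.rpow_zero, mul_one]
    refine essSup_le_of_ae_le _ ?_
    filter_upwards [hrow, hfg] with t ht hft
    calc ‖f t‖ₑ ≤ ∫⁻ r, k t r * ‖g r‖ₑ ∂ν := hft
      _ ≤ ∫⁻ r, k t r * eLpNormEssSup g ν ∂ν := by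
        refine lintegral_mono_ae ?_
        filter_upwards [enorm_ae_le_eLpNormEssSup g ν] with r hr
        gcongr
      _ = (∫⁻ r, k t r ∂ν) * eLpNormEssSup g ν :=
        lintegral_mul_const _ (hk.comp measurable_prodMk_left)
      _ ≤ a * eLpNormEssSup g ν := by gcongr
  have hq0 : q ≠ 0 := (zero_lt_one.trans_le hq).ne'
  rw [eLpNorm_eq_lintegral_rpow_enorm_toReal hq0 hqtop,
    eLpNorm_eq_lintegral_rpow_enorm_toReal hq0 hqtop]
  have hp : 1 ≤ q.toReal := ENNReal.toReal_mono hqtop hq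
  generalize q.toReal = p at hp ⊢
  have hp0 : 0 < p := zero_lt_one.trans_le hp
  calc (∫⁻ t, ‖f t‖ₑ ^ p ∂μ) ^ (1 / p)
      ≤ (∫⁻ t, (∫⁻ r, k t r * ‖g r‖ₑ ∂ν) ^ p ∂μ) ^ (1 / p) := by
        gcongr 1
        refine lintegral_mono_ae ?_
        filter_upwards [hfg] with t ht
        gcongr
    _ ≤ (a ^ (p - 1) * b * ∫⁻ r, ‖g r‖ₑ ^ p ∂ν) ^ (1 / p) := by
        gcongr
        exact lintegral_rpow_lintegral_mul_le hk hrow hcol hg.enorm hp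
    _ = a ^ (1 - 1 / p) * b ^ (1 / p) * (∫⁻ r, ‖g r‖ₑ ^ p ∂ν) ^ (1 / p) := by
        rw [ENNReal.mul_rpow_of_nonneg _ _ (by positivity),
          ENNReal.mul_rpow_of_nonneg _ _ (by positivity), ← ENNReal.rpow_mul, sub_mul,
          mul_one_div_cancel hp0.ne', one_mul]

end SchurTest

instance : SFinite mulHaar := by
  unfold mulHaar
  infer_instance

theorem mulHaar_absolutelyContinuous : mulHaar ≪ volume.restrict (Ioi 0) :=
  withDensity_absolutelyContinuous _ _

theorem ae_mulHaar_pos : ∀ᵐ t ∂mulHaar, 0 < t :=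
  mulHaar_absolutelyContinuous.ae_le (ae_restrict_mem measurableSet_Ioi)

theorem setLIntegral_mulHaar {u : Set ℝ} (hu : MeasurableSet u) (f : ℝ → ℝ≥0∞) :
    ∫⁻ t in u, f t ∂mulHaar = ∫⁻ t in u ∩ Ioi 0, ENNReal.ofReal t⁻¹ * f t := by
  rw [mulHaar, setLIntegral_withDensity_eq_setLIntegral_mul_non_measurable _ (by fun_prop) _ hu
    (.of_forall fun _ => ENNReal.ofReal_lt_top), Measure.restrict_restrict hu]
  rfl

theorem lintegral_mulHaar (f : ℝ → ℝ≥0∞) :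
    ∫⁻ t, f t ∂mulHaar = ∫⁻ t in Ioi 0, ENNReal.ofReal t⁻¹ * f t := by
  simpa using setLIntegral_mulHaar .univ f

theorem mulHaar_Ioc {a b : ℝ} (ha : 0 < a) (hab : a ≤ b) :
    mulHaar (Ioc a b) = ENNReal.ofReal (Real.log (b / a)) := by
  have hpos : Ioc a b ⊆ Ioi 0 := fun r hr => ha.trans hr.1
  have hint : IntegrableOn (fun r : ℝ => r⁻¹) (Ioc a b) := by
    rw [← intervalIntegrable_iff_integrableOn_Ioc_of_le hab]
    exact intervalIntegrable_inv_iff.2 (.inr (notMem_uIcc_of_lt ha (ha.trans_le hab)))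
  have hnonneg : 0 ≤ᵐ[volume.restrict (Ioc a b)] fun r : ℝ => r⁻¹ := by
    filter_upwards [ae_restrict_mem measurableSet_Ioc] with r hr
    exact inv_nonneg.2 (hpos hr).le
  rw [← setLIntegral_one, setLIntegral_mulHaar measurableSet_Ioc, inter_eq_left.2 hpos]
  simp_rw [mul_one]
  rw [← ofReal_integral_eq_lintegral_ofReal hint hnonneg, ← intervalIntegral.integral_of_le hab,
    integral_inv_of_pos ha (ha.trans_le hab)]

theorem setLIntegral_rpow_mulHaar {u : Set ℝ} (hu : MeasurableSet u) (p : ℝ) :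
    ∫⁻ r in u, ENNReal.ofReal (r ^ p) ∂mulHaar =
      ∫⁻ r in u ∩ Ioi 0, ENNReal.ofReal (r ^ (p - 1)) := by
  rw [setLIntegral_mulHaar hu]
  refine setLIntegral_congr_fun (hu.inter measurableSet_Ioi) fun r hr => ?_
  have hr0 : 0 < r := hr.2
  rw [← ENNReal.ofReal_mul (by positivity), Real.rpow_sub_one hr0.ne', inv_mul_eq_div]

theorem setLIntegral_Iic_rpow_mulHaar {p t : ℝ} (hp : 0 < p) (ht : 0 ≤ t) :
    ∫⁻ r in Iic t, ENNReal.ofReal (r ^ p) ∂mulHaar = ENNReal.ofReal (t ^ p / p) := by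
  have hint : IntegrableOn (fun r : ℝ => r ^ (p - 1)) (Ioc 0 t) := by
    rw [← intervalIntegrable_iff_integrableOn_Ioc_of_le ht]
    exact intervalIntegral.intervalIntegrable_rpow' (by linarith)
  have hnonneg : 0 ≤ᵐ[volume.restrict (Ioc 0 t)] fun r : ℝ => r ^ (p - 1) := by
    filter_upwards [ae_restrict_mem measurableSet_Ioc] with r hr
    exact Real.rpow_nonneg hr.1.le _
  rw [setLIntegral_rpow_mulHaar measurableSet_Iic, Iic_inter_Ioi,
    ← ofReal_integral_eq_lintegral_ofReal hint hnonneg, ← intervalIntegral.integral_of_le ht,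
    integral_rpow (.inl (by linarith)), sub_add_cancel, Real.zero_rpow hp.ne', sub_zero]

theorem setLIntegral_Ioi_rpow_neg_mulHaar {p t : ℝ} (hp : 0 < p) (ht : 0 < t) :
    ∫⁻ r in Ioi t, ENNReal.ofReal (r ^ (-p)) ∂mulHaar = ENNReal.ofReal (t ^ (-p) / p) := by
  have hint : IntegrableOn (fun r : ℝ => r ^ (-p - 1)) (Ioi t) :=
    integrableOn_Ioi_rpow_of_lt (by linarith) ht
  have hnonneg : 0 ≤ᵐ[volume.restrict (Ioi t)] fun r : ℝ => r ^ (-p - 1) := by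
    filter_upwards [ae_restrict_mem measurableSet_Ioi] with r hr
    exact Real.rpow_nonneg (ht.trans hr).le _
  rw [setLIntegral_rpow_mulHaar measurableSet_Ioi, Ioi_inter_Ioi, sup_eq_left.2 ht.le,
    ← ofReal_integral_eq_lintegral_ofReal hint hnonneg,
    integral_Ioi_rpow_of_lt (by linarith) ht, sub_add_cancel, neg_div_neg_eq]

/-- The kernel `min ((t/r)ˢ, (r/t)¹⁻ˢ)`, which is `min (1/t, 1/r)` conjugated by the weight `tˢ`
and taken relative to `dr/r`. -/
def weightKernel (s t r : ℝ) : ℝ≥0∞ := ENNReal.ofReal (min ((t / r) ^ s) ((r / t) ^ (1 - s)))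

theorem measurable_weightKernel (s : ℝ) : Measurable (Function.uncurry (weightKernel s)) := by
  unfold weightKernel Function.uncurry
  fun_prop

theorem weightKernel_swap (s t r : ℝ) : weightKernel (1 - s) r t = weightKernel s t r := by
  rw [weightKernel, weightKernel, sub_sub_cancel, min_comm]

theorem weightKernel_of_le {s t r : ℝ} (hs0 : 0 ≤ s) (hs1 : s ≤ 1) (hr : 0 < r) (hrt : r ≤ t) :
    weightKernel s t r = ENNReal.ofReal ((r / t) ^ (1 - s)) := by
  have ht : 0 < t := hr.trans_le hrt
  rw [weightKernel, min_eq_right]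
  exact (Real.rpow_le_one (by positivity) ((div_le_one ht).2 hrt) (sub_nonneg.2 hs1)).trans
    (Real.one_le_rpow ((one_le_div hr).2 hrt) hs0)

theorem weightKernel_of_ge {s t r : ℝ} (hs0 : 0 ≤ s) (hs1 : s ≤ 1) (ht : 0 < t) (htr : t ≤ r) :
    weightKernel s t r = ENNReal.ofReal ((t / r) ^ s) := by
  rw [← weightKernel_swap, weightKernel_of_le (sub_nonneg.2 hs1) (by linarith) ht htr,
    sub_sub_cancel]

theorem weightKernel_mul_rpow {s t r : ℝ} (ht : 0 < t) (hr : 0 < r) :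
    weightKernel s t r * ENNReal.ofReal (r ^ s) =
      ENNReal.ofReal (t ^ s * (r * min t⁻¹ r⁻¹)) := by
  rw [weightKernel, ← ENNReal.ofReal_mul' (by positivity), min_mul_of_nonneg _ _ (by positivity),
    mul_min_of_nonneg _ _ hr.le, mul_min_of_nonneg _ _ (by positivity), min_comm,
    mul_inv_cancel₀ hr.ne', Real.div_rpow ht.le hr.le, Real.div_rpow hr.le ht.le,
    Real.rpow_sub hr, Real.rpow_sub ht, Real.rpow_one, Real.rpow_one]
  congr 2 <;> field_simp

theorem lintegral_weightKernel_right {s t : ℝ} (hs0 : 0 < s) (hs1 : s < 1) (ht : 0 < t) :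
    ∫⁻ r, weightKernel s t r ∂mulHaar = ENNReal.ofReal (1 / (1 - s) + 1 / s) := by
  have hs1' : 0 < 1 - s := sub_pos.2 hs1
  have hIic : ∫⁻ r in Iic t, weightKernel s t r ∂mulHaar = ENNReal.ofReal (1 / (1 - s)) := by
    calc ∫⁻ r in Iic t, weightKernel s t r ∂mulHaar
        = ∫⁻ r in Iic t, ENNReal.ofReal (t ^ (-(1 - s))) * ENNReal.ofReal (r ^ (1 - s))
            ∂mulHaar := by
          refine setLIntegral_congr_fun_ae measurableSet_Iic ?_
          filter_upwards [ae_mulHaar_pos] with r hr hrt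
          rw [weightKernel_of_le hs0.le hs1.le hr hrt, ← ENNReal.ofReal_mul (by positivity),
            Real.div_rpow hr.le ht.le, Real.rpow_neg ht.le, inv_mul_eq_div]
      _ = ENNReal.ofReal (1 / (1 - s)) := by
          rw [lintegral_const_mul _ (by fun_prop), setLIntegral_Iic_rpow_mulHaar hs1' ht.le,
            ← ENNReal.ofReal_mul (by positivity), mul_div_assoc', ← Real.rpow_add ht,
            neg_add_cancel, Real.rpow_zero]
  have hIoi : ∫⁻ r in Ioi t, weightKernel s t r ∂mulHaar = ENNReal.ofReal (1 / s) := by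
    calc ∫⁻ r in Ioi t, weightKernel s t r ∂mulHaar
        = ∫⁻ r in Ioi t, ENNReal.ofReal (t ^ s) * ENNReal.ofReal (r ^ (-s)) ∂mulHaar := by
          refine setLIntegral_congr_fun measurableSet_Ioi fun r (hr : t < r) => ?_
          have hr0 : 0 < r := ht.trans hr
          rw [weightKernel_of_ge hs0.le hs1.le ht hr.le, ← ENNReal.ofReal_mul (by positivity),
            Real.div_rpow ht.le hr0.le, Real.rpow_neg hr0.le, div_eq_mul_inv]
      _ = ENNReal.ofReal (1 / s) := by
          rw [lintegral_const_mul _ (by fun_prop), setLIntegral_Ioi_rpow_neg_mulHaar hs0 ht,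
            ← ENNReal.ofReal_mul (by positivity), mul_div_assoc', ← Real.rpow_add ht,
            add_neg_cancel, Real.rpow_zero]
  rw [← lintegral_add_compl _ measurableSet_Iic, compl_Iic, hIic, hIoi,
    ENNReal.ofReal_add (by positivity) (by positivity)]

theorem lintegral_weightKernel_left {s r : ℝ} (hs0 : 0 < s) (hs1 : s < 1) (hr : 0 < r) :
    ∫⁻ t, weightKernel s t r ∂mulHaar = ENNReal.ofReal (1 / (1 - s) + 1 / s) := by
  simp_rw [← weightKernel_swap s _ r]
  rw [lintegral_weightKernel_right (sub_pos.2 hs1) (by linarith) hr, sub_sub_cancel, add_comm]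

theorem eLpNorm_mulHaar_le_of_enorm_le_lintegral_weightKernel {E F : Type*} [ENorm E]
    [TopologicalSpace F] [ContinuousENorm F] {s : ℝ} (hs0 : 0 < s) (hs1 : s < 1) {K : ℝ≥0∞}
    {f : ℝ → E} {g : ℝ → F} (hg : AEStronglyMeasurable g mulHaar)
    (hfg : ∀ t, 0 < t → ‖f t‖ₑ ≤ ∫⁻ r, K * weightKernel s t r * ‖g r‖ₑ ∂mulHaar)
    {q : ℝ≥0∞} (hq : 1 ≤ q) :
    eLpNorm f q mulHaar ≤
      K * ENNReal.ofReal (1 / (1 - s) + 1 / s) * eLpNorm g q mulHaar := by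
  have hmeas := measurable_weightKernel s
  have hq1 : 1 / q.toReal ≤ 1 := by
    rw [one_div, ← ENNReal.toReal_inv]
    exact ENNReal.toReal_le_of_le_ofReal zero_le_one (by simpa using hq)
  set c := K * ENNReal.ofReal (1 / (1 - s) + 1 / s)
  have hrow : ∀ᵐ t ∂mulHaar, ∫⁻ r, K * weightKernel s t r ∂mulHaar ≤ c := by
    filter_upwards [ae_mulHaar_pos] with t ht
    rw [lintegral_const_mul _ hmeas.of_uncurry_left, lintegral_weightKernel_right hs0 hs1 ht]
  have hcol : ∀ᵐ r ∂mulHaar, ∫⁻ t, K * weightKernel s t r ∂mulHaar ≤ c := by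
    filter_upwards [ae_mulHaar_pos] with r hr
    rw [lintegral_const_mul _ hmeas.of_uncurry_right, lintegral_weightKernel_left hs0 hs1 hr]
  calc eLpNorm f q mulHaar
      ≤ c ^ (1 - 1 / q.toReal) * c ^ (1 / q.toReal) * eLpNorm g q mulHaar :=
        eLpNorm_le_of_enorm_le_lintegral_kernel (hmeas.const_mul K) hrow hcol hg
          (ae_mulHaar_pos.mono hfg) hq
    _ = c * eLpNorm g q mulHaar := by
        rw [← ENNReal.rpow_add_of_nonneg _ _ (sub_nonneg.2 hq1) (by positivity), sub_add_cancel,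
          ENNReal.rpow_one]

theorem enorm_sub_le_lintegral_Ioi_of_tendsto {E : Type*} [NormedAddCommGroup E] [NormedSpace ℝ E]
    {f f' : ℝ → E} {v : ℝ → ℝ} {a : ℝ} {l m : E}
    (hderiv : ∀ r, a < r → HasDerivAt f (f' r) r) (hle : ∀ r, a < r → ‖f' r‖ ≤ v r)
    (hv : LocallyIntegrableOn v (Ioi a)) (hl : Tendsto f (𝓝[>] a) (𝓝 l))
    (hm : Tendsto f atTop (𝓝 m)) :
    ‖m - l‖ₑ ≤ ∫⁻ r in Ioi a, ENNReal.ofReal (v r) := by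
  have hdiff {b c : ℝ} (hb : a < b) (hbc : b ≤ c) :
      ‖f c - f b‖ₑ ≤ ∫⁻ r in Ioi a, ENNReal.ofReal (v r) := by
    have hsub : Icc b c ⊆ Ioi a := fun r hr => hb.trans_le hr.1
    have hint : IntegrableOn v (Ioc b c) :=
      (hv.integrableOn_compact_subset hsub isCompact_Icc).mono_set Ioc_subset_Icc_self
    have hnonneg : 0 ≤ᵐ[volume.restrict (Ioc b c)] v := by
      filter_upwards [ae_restrict_mem measurableSet_Ioc] with r hr
      exact (norm_nonneg _).trans (hle r (hb.trans hr.1))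
    calc ‖f c - f b‖ₑ
        ≤ ENNReal.ofReal (∫ r in b..c, v r) := by
          rw [← ofReal_norm]
          refine ENNReal.ofReal_le_ofReal (norm_sub_le_integral_of_norm_deriv_le_of_le hbc
            (fun r hr => (hderiv r (hsub hr)).continuousAt.continuousWithinAt)
            (fun r hr => (hderiv r (hb.trans hr.1)).differentiableAt.differentiableWithinAt)
            (.of_forall fun r hr => ?_)
            ((intervalIntegrable_iff_integrableOn_Ioc_of_le hbc).2 hint))
          rw [(hderiv r (hb.trans hr.1)).deriv]
          exact hle r (hb.trans hr.1)
      _ = ∫⁻ r in Ioc b c, ENNReal.ofReal (v r) := by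
          rw [intervalIntegral.integral_of_le hbc, ofReal_integral_eq_lintegral_ofReal hint hnonneg]
      _ ≤ ∫⁻ r in Ioi a, ENNReal.ofReal (v r) :=
          lintegral_mono_set (Ioc_subset_Icc_self.trans hsub)
  have hlim : Tendsto (fun p : ℝ × ℝ => ‖f p.2 - f p.1‖ₑ) (𝓝[>] a ×ˢ atTop) (𝓝 ‖m - l‖ₑ) :=
    ((hm.comp tendsto_snd).sub (hl.comp tendsto_fst)).enorm
  refine le_of_tendsto hlim ?_
  filter_upwards [prod_mem_prod (Ioo_mem_nhdsGT (lt_add_one a)) (Ici_mem_atTop (a + 1))]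
    with p hp
  exact hdiff hp.1.1 (hp.1.2.le.trans hp.2)

section AlmostDecreasing

variable {E : Type*} [NormedAddCommGroup E] {f : ℝ → E} {M s : ℝ} {q : ℝ≥0∞}

theorem ofReal_rpow_mul_enorm_le_eLpNorm_of_almost_decreasing
    (hf : ∀ r t, 0 < r → r ≤ t → ‖f t‖ ≤ M * ‖f r‖) (hs : 0 ≤ s) (hq : q ≠ 0) {t : ℝ}
    (ht : 0 < t) :
    ENNReal.ofReal ((t / 2) ^ s) * ‖f t‖ₑ * ENNReal.ofReal (Real.log 2) ^ (1 / q.toReal) ≤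
      ENNReal.ofReal M * eLpNorm (fun r => r ^ s * ‖f r‖) q mulHaar := by
  have hmass : mulHaar (Ioc (t / 2) t) = ENNReal.ofReal (Real.log 2) := by
    rw [mulHaar_Ioc (half_pos ht) (half_le_self ht.le), div_div_cancel₀ ht.ne']
  have hne : mulHaar.restrict (Ioc (t / 2) t) ≠ 0 := by
    rw [Ne, Measure.restrict_eq_zero, hmass]
    exact (ENNReal.ofReal_pos.2 (Real.log_pos one_lt_two)).ne'
  have hbound : ∀ᵐ r ∂mulHaar.restrict (Ioc (t / 2) t),
      ‖(t / 2) ^ s * ‖f t‖‖ ≤ M * ‖r ^ s * ‖f r‖‖ := by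
    filter_upwards [ae_restrict_mem measurableSet_Ioc] with r ⟨hr, hrt⟩
    have hr0 : 0 < r := (half_pos ht).trans hr
    rw [Real.norm_of_nonneg (by positivity), Real.norm_of_nonneg (by positivity),
      mul_left_comm]
    gcongr
    exact hf r t hr0 hrt
  calc ENNReal.ofReal ((t / 2) ^ s) * ‖f t‖ₑ * ENNReal.ofReal (Real.log 2) ^ (1 / q.toReal)
      = eLpNorm (fun _ : ℝ => (t / 2) ^ s * ‖f t‖) q (mulHaar.restrict (Ioc (t / 2) t)) := by
        rw [eLpNorm_const _ hq hne, Measure.restrict_apply_univ, hmass, enorm_mul, enorm_norm,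
          Real.enorm_of_nonneg (by positivity)]
    _ ≤ ENNReal.ofReal M *
          eLpNorm (fun r => r ^ s * ‖f r‖) q (mulHaar.restrict (Ioc (t / 2) t)) :=
        eLpNorm_le_mul_eLpNorm_of_ae_le_mul hbound q
    _ ≤ ENNReal.ofReal M * eLpNorm (fun r => r ^ s * ‖f r‖) q mulHaar := by
        gcongr
        exact Measure.restrict_le_self

theorem tendsto_zero_of_eLpNorm_mulHaar_ne_top
    (hf : ∀ r t, 0 < r → r ≤ t → ‖f t‖ ≤ M * ‖f r‖) (hs : 0 < s) (hq : q ≠ 0)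
    (hfin : eLpNorm (fun r => r ^ s * ‖f r‖) q mulHaar ≠ ∞) :
    Tendsto f atTop (𝓝 0) := by
  set L := ENNReal.ofReal (Real.log 2) ^ (1 / q.toReal)
  set N := ENNReal.ofReal M * eLpNorm (fun r => r ^ s * ‖f r‖) q mulHaar
  have hL : 0 < L.toReal := by
    have hlog : 0 < Real.log 2 := Real.log_pos one_lt_two
    rw [← ENNReal.toReal_rpow, ENNReal.toReal_ofReal hlog.le]
    positivity
  have hle : ∀ t, 0 < t → ‖f t‖ ≤ N.toReal / L.toReal / (t / 2) ^ s := fun t ht => by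
    have hbound := ENNReal.toReal_mono (ENNReal.mul_ne_top ENNReal.ofReal_ne_top hfin)
      (ofReal_rpow_mul_enorm_le_eLpNorm_of_almost_decreasing hf hs.le hq ht)
    rw [ENNReal.toReal_mul, ENNReal.toReal_mul, ENNReal.toReal_ofReal (by positivity),
      toReal_enorm] at hbound
    rwa [le_div_iff₀' (by positivity), le_div_iff₀ hL]
  have hpow : Tendsto (fun t : ℝ => (t / 2) ^ s) atTop atTop :=
    (tendsto_rpow_atTop hs).comp (tendsto_id.atTop_div_const two_pos)
  exact squeeze_zero_norm' ((eventually_gt_atTop 0).mono hle) (hpow.const_div_atTop _)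

end AlmostDecreasing

section Semigroup

variable {E F : Type*} [NormedAddCommGroup E] [NormedSpace ℝ E] [NormedAddCommGroup F]
  [NormedSpace ℝ F] {D : Set E} {A S : E → E} {TA TS : ℝ → E →L[ℝ] E} {MA CA MS CS : ℝ}

namespace IsBAS

-- `MA` and `CA` may be negative when the space is trivial, hence the absolute values.
theorem norm_apply_le (h : IsBAS D A TA MA CA) {t : ℝ} (ht : 0 ≤ t) (x : E) :
    ‖TA t x‖ ≤ |MA| * ‖x‖ := by
  grw [h.T_bdd t ht x, ← le_abs_self MA]

theorem norm_generator_apply_le (h : IsBAS D A TA MA CA) {t : ℝ} (ht : 0 < t) (x : E) :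
    ‖A (TA t x)‖ ≤ |CA| * (t⁻¹ * ‖x‖) := by
  rw [mul_left_comm, inv_mul_eq_div, le_div_iff₀' ht]
  grw [h.analytic_bdd x t ht, ← le_abs_self CA]

theorem add_apply (h : IsBAS D A TA MA CA) {t r : ℝ} (ht : 0 ≤ t) (hr : 0 ≤ r) (x : E) :
    TA (t + r) x = TA t (TA r x) := by
  rw [h.T_semigroup t ht r hr, ContinuousLinearMap.comp_apply]

theorem apply_eq_sub (h : IsBAS D A TA MA CA) {t r : ℝ} (hr : 0 ≤ r) (hrt : r ≤ t) (x : E) :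
    TA t x = TA (t - r) (TA r x) := by
  rw [← h.add_apply (sub_nonneg.2 hrt) hr, sub_add_cancel]

theorem hasDerivAt (h : IsBAS D A TA MA CA) (x : E) {t : ℝ} (ht : 0 < t) :
    HasDerivAt (fun τ => TA τ x) (A (TA t x)) t := by
  have hmem := h.analytic_mem x (t / 2) (half_pos ht)
  have hsub : 0 < t - t / 2 := sub_pos.2 (half_lt_self ht)
  have hd : HasDerivAt (fun τ => TA τ (TA (t / 2) x)) (A (TA t x)) (t - t / 2) := by
    rw [h.apply_eq_sub (half_pos ht).le (half_le_self ht.le), h.T_comm _ hmem _ hsub.le]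
    exact (h.T_deriv _ hmem _ hsub.le).hasDerivAt (Ici_mem_nhds hsub)
  refine (hd.comp_sub_const t (t / 2)).congr_of_eventuallyEq ?_
  filter_upwards [Ici_mem_nhds (half_lt_self ht)] with τ hτ
  exact h.apply_eq_sub (half_pos ht).le hτ x

theorem continuousOn_rpow_mul_norm (h : IsBAS D A TA MA CA) (s : ℝ) (x : E) :
    ContinuousOn (fun t : ℝ => t ^ s * ‖TA t x‖) (Ioi 0) :=
  (continuousOn_id.rpow_const fun _ hr => .inl (ne_of_gt hr)).mul
    ((h.T_cont x).mono Ioi_subset_Ici_self).norm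

theorem tendsto_zero_of_eLpNorm_ne_top (h : IsBAS D A TA MA CA) {s : ℝ} (hs : 0 < s) {q : ℝ≥0∞}
    (hq : q ≠ 0) {x : E} (hfin : eLpNorm (fun t : ℝ => t ^ s * ‖TA t x‖) q mulHaar ≠ ∞) :
    Tendsto (fun t => TA t x) atTop (𝓝 0) := by
  refine tendsto_zero_of_eLpNorm_mulHaar_ne_top (M := |MA|) (fun r t hr hrt => ?_) hs hq hfin
  rw [h.apply_eq_sub hr.le hrt]
  exact h.norm_apply_le (sub_nonneg.2 hrt) _

theorem enorm_clm_apply_le_lintegral (h : IsBAS D A TA MA CA) (P : E →L[ℝ] F) {c : ℝ}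
    (hc : 0 < c) {v : ℝ → ℝ} (hv : LocallyIntegrableOn v (Ioi 0)) {y : E}
    (hle : ∀ r, 0 < r → ‖P (A (TA (c * r) y))‖ ≤ v r)
    (hdecay : Tendsto (fun t => TA t y) atTop (𝓝 0)) :
    ‖P y‖ₑ ≤ ∫⁻ r in Ioi 0, ENNReal.ofReal (c * v r) := by
  have hderiv : ∀ r, 0 < r → HasDerivAt (fun r => P (TA (c * r) y)) (c • P (A (TA (c * r) y))) r :=
    fun r hr => by
      have hscale : HasDerivAt (fun r : ℝ => c * r) c r := by
        simpa using (hasDerivAt_id r).const_mul c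
      simpa [Function.comp_def] using
        P.hasFDerivAt.comp_hasDerivAt r ((h.hasDerivAt y (mul_pos hc hr)).scomp r hscale)
  have hbound : ∀ r, 0 < r → ‖c • P (A (TA (c * r) y))‖ ≤ c * v r := fun r hr => by
    rw [norm_smul, Real.norm_of_nonneg hc.le]
    exact mul_le_mul_of_nonneg_left (hle r hr) hc.le
  have hzero : Tendsto (fun r => P (TA (c * r) y)) (𝓝[>] 0) (𝓝 (P y)) := by
    have hcont : ContinuousOn (fun r => P (TA (c * r) y)) (Ici 0) :=
      P.continuous.comp_continuousOn
        ((h.T_cont y).comp (by fun_prop) fun r (hr : 0 ≤ r) => mul_nonneg hc.le hr)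
    simpa [h.T_zero] using (hcont 0 self_mem_Ici).mono_left (nhdsWithin_mono 0 Ioi_subset_Ici_self)
  have hatTop : Tendsto (fun r => P (TA (c * r) y)) atTop (𝓝 0) := by
    simpa [Function.comp_def] using
      (P.continuous.tendsto 0).comp (hdecay.comp (tendsto_id.const_mul_atTop hc))
  simpa only [zero_sub, enorm_neg] using
    enorm_sub_le_lintegral_Ioi_of_tendsto hderiv hbound (hv.smul c) hzero hatTop

end IsBAS

variable {B : E →L[ℝ] E}

theorem exists_norm_apply_generator_apply_le (hA : IsBAS D A TA MA CA) (hS : IsBAS D S TS MS CS)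
    (hSA : ∀ x ∈ D, S x = B (A x)) :
    ∃ K : ℝ, 0 < K ∧ ∀ t r, 0 < t → 0 < r → ∀ y,
      ‖TS t (B (A (TA (2 * r) y)))‖ ≤ K * (min t⁻¹ r⁻¹ * ‖TA r y‖) := by
  refine ⟨|CS| * |MA| + |MS| * (‖B‖ * |CA|) + 1, by positivity, fun t r ht hr y => ?_⟩
  have hdouble : TA (2 * r) y = TA r (TA r y) := by rw [two_mul, hA.add_apply hr.le hr.le]
  have hmem : TA (2 * r) y ∈ D := hA.analytic_mem y _ (by positivity)
  have hle_t : ‖TS t (B (A (TA (2 * r) y)))‖ ≤ |CS| * |MA| * (t⁻¹ * ‖TA r y‖) := by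
    rw [← hSA _ hmem, ← hS.T_comm _ hmem t ht.le, hdouble]
    grw [hS.norm_generator_apply_le ht, hA.norm_apply_le hr.le]
    exact le_of_eq (by ring)
  have hle_r : ‖TS t (B (A (TA (2 * r) y)))‖ ≤ |MS| * (‖B‖ * |CA|) * (r⁻¹ * ‖TA r y‖) := by
    rw [hdouble]
    grw [hS.norm_apply_le ht.le, B.le_opNorm, hA.norm_generator_apply_le hr]
    exact le_of_eq (by ring)
  rw [min_mul_of_nonneg _ _ (norm_nonneg _), mul_min_of_nonneg _ _ (by positivity)]
  refine le_min (hle_t.trans ?_) (hle_r.trans ?_) <;> gcongr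
  · linarith [show 0 ≤ |MS| * (‖B‖ * |CA|) by positivity]
  · linarith [show 0 ≤ |CS| * |MA| by positivity]

theorem exists_enorm_le_lintegral_weightKernel (hA : IsBAS D A TA MA CA)
    (hS : IsBAS D S TS MS CS) (hSA : ∀ x ∈ D, S x = B (A x)) :
    ∃ K : ℝ, 0 < K ∧ ∀ (s t : ℝ) (y : E), 0 < t → Tendsto (fun r => TA r y) atTop (𝓝 0) →
      ‖t ^ s * ‖TS t (B y)‖‖ₑ ≤
        ∫⁻ r, ENNReal.ofReal K * weightKernel s t r * ‖r ^ s * ‖TA r y‖‖ₑ ∂mulHaar := by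
  obtain ⟨K, hK, hle⟩ := exists_norm_apply_generator_apply_le hA hS hSA
  refine ⟨2 * K, by positivity, fun s t y ht hdecay => ?_⟩
  have hv : LocallyIntegrableOn (fun r => K * (min t⁻¹ r⁻¹ * ‖TA r y‖)) (Ioi 0) := by
    refine ContinuousOn.locallyIntegrableOn ?_ measurableSet_Ioi
    exact continuousOn_const.mul ((continuousOn_const.inf
      (continuousOn_inv₀.mono fun r hr => ne_of_gt hr)).mul
        ((hA.T_cont y).mono Ioi_subset_Ici_self).norm)
  calc ‖t ^ s * ‖TS t (B y)‖‖ₑ = ENNReal.ofReal (t ^ s) * ‖TS t (B y)‖ₑ := by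
        rw [enorm_mul, enorm_norm, Real.enorm_of_nonneg (by positivity)]
    _ ≤ ENNReal.ofReal (t ^ s) *
          ∫⁻ r in Ioi 0, ENNReal.ofReal (2 * (K * (min t⁻¹ r⁻¹ * ‖TA r y‖))) := by
        gcongr
        exact hA.enorm_clm_apply_le_lintegral ((TS t).comp B) two_pos hv
          (fun r hr => hle t r ht hr y) hdecay
    _ = ∫⁻ r in Ioi 0, ENNReal.ofReal (t ^ s) *
          ENNReal.ofReal (2 * (K * (min t⁻¹ r⁻¹ * ‖TA r y‖))) :=
        (lintegral_const_mul' _ _ ENNReal.ofReal_ne_top).symm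
    _ = ∫⁻ r, ENNReal.ofReal (2 * K) * weightKernel s t r * ‖r ^ s * ‖TA r y‖‖ₑ ∂mulHaar := by
        rw [lintegral_mulHaar]
        refine setLIntegral_congr_fun measurableSet_Ioi fun r (hr : 0 < r) => ?_
        rw [Real.enorm_of_nonneg (by positivity), ENNReal.ofReal_mul (by positivity : 0 ≤ r ^ s),
          mul_assoc (ENNReal.ofReal (2 * K)), ← mul_assoc (weightKernel s t r),
          weightKernel_mul_rpow ht hr, ← ENNReal.ofReal_mul (by positivity),
          ← ENNReal.ofReal_mul (by positivity), ← ENNReal.ofReal_mul (by positivity),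
          ← ENNReal.ofReal_mul (by positivity)]
        congr 1
        field_simp

theorem exists_eLpNorm_apply_le (hA : IsBAS D A TA MA CA) (hS : IsBAS D S TS MS CS)
    (hSA : ∀ x ∈ D, S x = B (A x)) {s : ℝ} (hs0 : 0 < s) (hs1 : s < 1) {q : ℝ≥0∞} (hq : 1 ≤ q) :
    ∃ C : ℝ, 0 < C ∧ ∀ y : E, eLpNorm (fun t : ℝ => t ^ s * ‖TS t (B y)‖) q mulHaar ≤
      ENNReal.ofReal C * eLpNorm (fun t : ℝ => t ^ s * ‖TA t y‖) q mulHaar := by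
  obtain ⟨K, hK, hle⟩ := exists_enorm_le_lintegral_weightKernel hA hS hSA
  have hC : 0 < K * (1 / (1 - s) + 1 / s) :=
    mul_pos hK (add_pos (one_div_pos.2 (sub_pos.2 hs1)) (one_div_pos.2 hs0))
  refine ⟨_, hC, fun y => ?_⟩
  by_cases hfin : eLpNorm (fun t : ℝ => t ^ s * ‖TA t y‖) q mulHaar = ∞
  · rw [hfin, ENNReal.mul_top (ENNReal.ofReal_pos.2 hC).ne']
    exact le_top
  have hdecay := hA.tendsto_zero_of_eLpNorm_ne_top hs0 (zero_lt_one.trans_le hq).ne' hfin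
  have hmeas : AEStronglyMeasurable (fun t : ℝ => t ^ s * ‖TA t y‖) mulHaar :=
    ((hA.continuousOn_rpow_mul_norm s y).aestronglyMeasurable measurableSet_Ioi).mono_ac
      mulHaar_absolutelyContinuous
  rw [ENNReal.ofReal_mul hK.le]
  exact eLpNorm_mulHaar_le_of_enorm_le_lintegral_weightKernel hs0 hs1 hmeas
    (fun t ht => hle s t y ht hdecay) hq

theorem equiv_norms_negative_regularity_general {B : E ≃L[ℝ] E} (hA : IsBAS D A TA MA CA)
    (hS : IsBAS D (fun x => B (A x)) TS MS CS) {s : ℝ} (hs0 : 0 < s) (hs1 : s < 1) {q : ℝ≥0∞}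
    (hq : 1 ≤ q) :
    ∃ c : ℝ, 0 < c ∧ ∃ C : ℝ, 0 < C ∧ ∀ x : E,
      ENNReal.ofReal c * eLpNorm (fun t : ℝ => t ^ s * ‖TA t (B.symm x)‖) q mulHaar ≤
        eLpNorm (fun t : ℝ => t ^ s * ‖TS t x‖) q mulHaar ∧
      eLpNorm (fun t : ℝ => t ^ s * ‖TS t x‖) q mulHaar ≤
        ENNReal.ofReal C * eLpNorm (fun t : ℝ => t ^ s * ‖TA t (B.symm x)‖) q mulHaar := by
  obtain ⟨C, hC, hupper⟩ :=
    exists_eLpNorm_apply_le (B := (B : E →L[ℝ] E)) hA hS (fun _ _ => rfl) hs0 hs1 hq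
  obtain ⟨C', hC', hlower⟩ :=
    exists_eLpNorm_apply_le (B := (B.symm : E →L[ℝ] E)) hS hA (fun _ _ => by simp) hs0 hs1 hq
  refine ⟨C'⁻¹, inv_pos.2 hC', C, hC, fun x => ⟨?_, by simpa using hupper (B.symm x)⟩⟩
  rw [ENNReal.ofReal_inv_of_pos hC', ENNReal.inv_mul_le_iff (ENNReal.ofReal_pos.2 hC').ne'
    ENNReal.ofReal_ne_top]
  exact hlower x

end Semigroup

/-- Equivalence of Besov-type norms with negative regularity for a composite
operator: if `A` generates a decaying bounded analytic semigroup `T_A`, `B` is a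
continuous linear bijection with continuous inverse, and `S = B∘A` (with the same
domain) generates a decaying bounded analytic semigroup `T_S`, then for all
`s ∈ (0,1)`, `q ∈ [1,∞]` the norms `‖tˢ‖T_S(t)x‖‖_{L^q(dt/t)}` and
`‖tˢ‖T_A(t)B⁻¹x‖‖_{L^q(dt/t)}` are equivalent, uniformly in `x`. -/
theorem equiv_norms_negative_regularity
    (DA : Set X) (A : X → X) (B : X ≃L[ℝ] X)
    (TA TS : ℝ → X →L[ℝ] X) (MA CA MS CS : ℝ)
    (hA : IsBAS DA A TA MA CA)
    (hAdecay : ∀ x : X, Filter.Tendsto (fun t => ‖TA t x‖) Filter.atTop (nhds 0))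
    (hS : IsBAS DA (fun x => B (A x)) TS MS CS)
    (hSdecay : ∀ x : X, Filter.Tendsto (fun t => ‖TS t x‖) Filter.atTop (nhds 0))
    (s : ℝ) (hs0 : 0 < s) (hs1 : s < 1) (q : ℝ≥0∞) (hq : 1 ≤ q) :
    ∃ c : ℝ, 0 < c ∧ ∃ C : ℝ, 0 < C ∧ ∀ x : X,
      ENNReal.ofReal c *
          eLpNorm (fun t : ℝ => t ^ s * ‖TA t (B.symm x)‖) q mulHaar
        ≤ eLpNorm (fun t : ℝ => t ^ s * ‖TS t x‖) q mulHaar ∧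
      eLpNorm (fun t : ℝ => t ^ s * ‖TS t x‖) q mulHaar
        ≤ ENNReal.ofReal C *
            eLpNorm (fun t : ℝ => t ^ s * ‖TA t (B.symm x)‖) q mulHaar := by
  exact equiv_norms_negative_regularity_general hA hS hs0 hs1 hq
end
end
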